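/- arXiv:1706.07498 — 3 statements merged into one kernel-verified Lean document; each statement's English description precedes it below -/
import Mathlib

section
/- The Cayley conjugate C M^E C* of the transfer operator is J-unitary and equals the block operator (1/2)[[(E−V)T⁻¹ − i(T* + T⁻¹), (E−V)T⁻¹ + i(T* − T⁻¹)],[(E−V)T⁻¹ − i(T* − T⁻¹), (E−V)T⁻¹ + i(T* + T⁻¹)]]. -/
open ContinuousLinearMap

noncomputable section

variable {H : Type*} [NormedAddCommGroup H] [InnerProductSpace ℂ H] [CompleteSpace H]

/-- The Hilbert space `K = H ⊕ H` (with the `ℓ²` product norm). -/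
abbrev Kspace (H : Type*) [NormedAddCommGroup H] [InnerProductSpace ℂ H] : Type _ :=
  WithLp 2 (H × H)

/-- The block operator `[[A,B],[C,D]]` on `K`, acting by `(x,y) ↦ (Ax + By, Cx + Dy)`. -/
def blockOp (A B C D : H →L[ℂ] H) : Kspace H →L[ℂ] Kspace H :=
  (((WithLp.prodContinuousLinearEquiv 2 ℂ H H).symm : (H × H) →L[ℂ] Kspace H)) ∘L
    (((A ∘L ContinuousLinearMap.fst ℂ H H) + (B ∘L ContinuousLinearMap.snd ℂ H H)).prod
      ((C ∘L ContinuousLinearMap.fst ℂ H H) + (D ∘L ContinuousLinearMap.snd ℂ H H))) ∘L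
    (((WithLp.prodContinuousLinearEquiv 2 ℂ H H) : Kspace H →L[ℂ] H × H))

/-- The fundamental symmetry `J = [[1,0],[0,-1]]`. -/
def Jop (H : Type*) [NormedAddCommGroup H] [InnerProductSpace ℂ H] [CompleteSpace H] :
    Kspace H →L[ℂ] Kspace H :=
  blockOp 1 0 0 (-1)

/-- The Cayley transform `C = (1/√2)[[1, -i],[1, i]]`. -/
def Cayley (H : Type*) [NormedAddCommGroup H] [InnerProductSpace ℂ H] [CompleteSpace H] :
    Kspace H →L[ℂ] Kspace H :=
  blockOp (((Real.sqrt 2 : ℂ)⁻¹) • 1) ((-((Real.sqrt 2 : ℂ)⁻¹ * Complex.I)) • 1)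
    (((Real.sqrt 2 : ℂ)⁻¹) • 1) ((((Real.sqrt 2 : ℂ)⁻¹ * Complex.I)) • 1)

/-- The transfer operator `M^E = [[(E − V)T⁻¹, −T*],[T⁻¹, 0]]`, where the inverse `T⁻¹`
is given as the operator `Tinv`. -/
def transferOp (E : ℝ) (V T Tinv : H →L[ℂ] H) : Kspace H →L[ℂ] Kspace H :=
  blockOp ((((E : ℂ) • (1 : H →L[ℂ] H)) - V) ∘L Tinv) (-(adjoint T)) Tinv 0

/-!
The transfer operator factors as `M^E = [[1, E - V], [0, 1]] I [[T⁻¹, 0], [0, T*]]`, a product of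
three `I`-unitaries. Since `C` is unitary and `J = i C I C*`, conjugation by `C` turns `I`-unitaries
into `J`-unitaries. The block form of `C M^E C*` is an instance of the formula for `C N C*` with an
arbitrary block operator `N`.
-/

section FormUnitary

variable {R : Type*} [Monoid R] [StarMul R]

/-- The unitaries of the sesquilinear form given by `q`: the invertible `n` with `n* q n = q`.
For `q = J` and `q = I` these are the `J`-unitary and the `I`-unitary operators. -/
def formUnitary (q : R) : Submonoid R where
  carrier := {n | IsUnit n ∧ star n * q * n = q}
  one_mem' := ⟨isUnit_one, by rw [star_one, one_mul, mul_one]⟩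
  mul_mem' := by
    rintro m n ⟨hm, hmq⟩ ⟨hn, hnq⟩
    refine ⟨hm.mul hn, ?_⟩
    calc star (m * n) * q * (m * n) = star n * (star m * q * m) * n := by
          simp only [star_mul, mul_assoc]
      _ = q := by rw [hmq, hnq]

theorem mem_formUnitary_iff {q n : R} :
    n ∈ formUnitary q ↔ IsUnit n ∧ star n * q * n = q :=
  Iff.rfl

theorem mem_formUnitary_self {u : R} (hu : u ∈ unitary R) : u ∈ formUnitary u :=
  ⟨Unitary.isUnit_coe (U := ⟨u, hu⟩), by rw [Unitary.star_mul_self_of_mem hu, one_mul]⟩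

theorem conj_mem_formUnitary {q n u : R} (hu : u ∈ unitary R) (hn : n ∈ formUnitary q) :
    u * n * star u ∈ formUnitary (u * q * star u) := by
  have hu_unit : IsUnit u := Unitary.isUnit_coe (U := ⟨u, hu⟩)
  refine ⟨(hu_unit.mul hn.1).mul hu_unit.star, ?_⟩
  calc star (u * n * star u) * (u * q * star u) * (u * n * star u)
      = u * (star n * ((star u * u) * q * (star u * u)) * n) * star u := by
        simp only [star_mul, star_star, mul_assoc]
    _ = u * q * star u := by
        rw [Unitary.star_mul_self_of_mem hu, one_mul, mul_one, hn.2]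

theorem formUnitary_le_formUnitary_smul {S : Type*} [SMul S R] [IsScalarTower S R R]
    [SMulCommClass S R R] (c : S) (q : R) : formUnitary q ≤ formUnitary (c • q) :=
  fun n hn ↦ ⟨hn.1, by rw [mul_smul_comm, smul_mul_assoc, hn.2]⟩

end FormUnitary

section BlockOp

variable {G : Type*} [NormedAddCommGroup G] [InnerProductSpace ℂ G]

theorem blockOp_apply (A B C D : G →L[ℂ] G) (x : Kspace G) :
    blockOp A B C D x = WithLp.toLp 2 (A x.fst + B x.snd, C x.fst + D x.snd) :=
  rfl

theorem blockOp_mul_blockOp (A B C D A' B' C' D' : G →L[ℂ] G) :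
    blockOp A B C D * blockOp A' B' C' D' =
      blockOp (A * A' + B * C') (A * B' + B * D') (C * A' + D * C') (C * B' + D * D') := by
  ext x
  simp only [mul_def, comp_apply, blockOp_apply]
  refine congrArg (WithLp.toLp 2) (Prod.ext ?_ ?_) <;>
  · simp only [WithLp.toLp_fst, WithLp.toLp_snd, comp_apply, add_apply, map_add]
    abel

theorem blockOp_one : blockOp (1 : G →L[ℂ] G) 0 0 1 = 1 := by
  ext x
  simp only [blockOp_apply, zero_apply, add_zero, zero_add]
  rfl

theorem smul_blockOp (c : ℂ) (A B C D : G →L[ℂ] G) :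
    c • blockOp A B C D = blockOp (c • A) (c • B) (c • C) (c • D) := by
  ext x
  simp only [smul_apply, blockOp_apply, ← smul_add]
  rfl

theorem isUnit_blockOp_diag {A D : G →L[ℂ] G} (hA : IsUnit A) (hD : IsUnit D) :
    IsUnit (blockOp A 0 0 D) := by
  obtain ⟨A, rfl⟩ := hA
  obtain ⟨D, rfl⟩ := hD
  refine isUnit_iff_exists.2 ⟨blockOp ↑A⁻¹ 0 0 ↑D⁻¹, ?_, ?_⟩ <;>
    simp [blockOp_mul_blockOp, blockOp_one]

theorem isUnit_blockOp_shear (W : G →L[ℂ] G) : IsUnit (blockOp 1 W 0 1) := by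
  refine isUnit_iff_exists.2 ⟨blockOp 1 (-W) 0 1, ?_, ?_⟩ <;>
    simp [blockOp_mul_blockOp, blockOp_one]

end BlockOp

theorem star_blockOp (A B C D : H →L[ℂ] H) :
    star (blockOp A B C D) = blockOp (star A) (star C) (star B) (star D) := by
  simp only [star_eq_adjoint]
  refine (eq_adjoint_iff _ _).2 (fun x y ↦ ?_) |>.symm
  simp only [blockOp_apply, WithLp.prod_inner_apply, inner_add_left, inner_add_right,
    adjoint_inner_left, WithLp.fst, WithLp.snd]
  ring

/-- The skew-adjoint unitary `I = [[0, -1], [1, 0]]`, whose form the transfer operators preserve. -/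
def Iop (G : Type*) [NormedAddCommGroup G] [InnerProductSpace ℂ G] : Kspace G →L[ℂ] Kspace G :=
  blockOp 0 (-1) 1 0

theorem iop_mem_unitary : Iop H ∈ unitary (Kspace H →L[ℂ] Kspace H) := by
  refine Unitary.mem_iff.2 ⟨?_, ?_⟩ <;>
    simp [Iop, star_blockOp, blockOp_mul_blockOp, blockOp_one]

theorem blockOp_shear_mem_formUnitary {W : H →L[ℂ] H} (hW : IsSelfAdjoint W) :
    blockOp 1 W 0 1 ∈ formUnitary (Iop H) :=
  ⟨isUnit_blockOp_shear W, by simp [Iop, star_blockOp, blockOp_mul_blockOp, hW.star_eq]⟩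

theorem blockOp_diag_mem_formUnitary (S : (H →L[ℂ] H)ˣ) :
    blockOp ↑S 0 0 (star ↑S⁻¹) ∈ formUnitary (Iop H) := by
  refine ⟨isUnit_blockOp_diag S.isUnit S⁻¹.isUnit.star, ?_⟩
  simp [Iop, star_blockOp, blockOp_mul_blockOp, ← star_mul]

theorem inv_sqrt_two_mul_self : (Real.sqrt 2 : ℂ)⁻¹ * (Real.sqrt 2 : ℂ)⁻¹ = 2⁻¹ := by
  rw [← mul_inv, ← Complex.ofReal_mul, Real.mul_self_sqrt zero_le_two, Complex.ofReal_ofNat]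

theorem cayley_eq_smul_blockOp : Cayley H = (Real.sqrt 2 : ℂ)⁻¹ •
    blockOp 1 (-Complex.I • 1) 1 (Complex.I • 1) := by
  simp only [Cayley, smul_blockOp, smul_smul, mul_neg]

theorem star_cayley : star (Cayley H) = (Real.sqrt 2 : ℂ)⁻¹ •
    blockOp 1 1 (Complex.I • 1) (-Complex.I • 1) := by
  simp [cayley_eq_smul_blockOp, star_blockOp]

theorem cayley_mul_blockOp_mul_star_cayley (A B C D : H →L[ℂ] H) :
    Cayley H * blockOp A B C D * star (Cayley H) = (2 : ℂ)⁻¹ •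
      blockOp (A + D + Complex.I • (B - C)) (A - D - Complex.I • (B + C))
        (A - D + Complex.I • (B + C)) (A + D - Complex.I • (B - C)) := by
  rw [star_cayley, cayley_eq_smul_blockOp]
  simp only [smul_mul_assoc, mul_smul_comm, smul_smul, inv_sqrt_two_mul_self, blockOp_mul_blockOp,
    one_mul, mul_one]
  congr 2 <;> match_scalars <;> simp

theorem cayley_mem_unitary : Cayley H ∈ unitary (Kspace H →L[ℂ] Kspace H) := by
  refine Unitary.mem_iff.2 ⟨?_, ?_⟩
  · rw [star_cayley, cayley_eq_smul_blockOp, smul_mul_smul_comm, inv_sqrt_two_mul_self,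
      blockOp_mul_blockOp, smul_blockOp, ← blockOp_one]
    simp only [smul_mul_smul_comm, mul_one, one_mul, neg_mul, mul_neg, Complex.I_mul_I]
    congr 1 <;> module
  · have h := cayley_mul_blockOp_mul_star_cayley (H := H) 1 0 0 1
    rw [blockOp_one, mul_one] at h
    rw [h, smul_blockOp, ← blockOp_one]
    congr 1 <;> module

theorem jop_eq_smul_cayley_conj_iop :
    Jop H = Complex.I • (Cayley H * Iop H * star (Cayley H)) := by
  rw [Jop, Iop, cayley_mul_blockOp_mul_star_cayley, smul_smul, smul_blockOp]
  simp only [smul_add, smul_sub, smul_smul, mul_right_comm, Complex.I_mul_I]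
  congr 1 <;> module

theorem cayley_conj_mem_formUnitary {N : Kspace H →L[ℂ] Kspace H}
    (hN : N ∈ formUnitary (Iop H)) :
    Cayley H * N * star (Cayley H) ∈ formUnitary (Jop H) := by
  rw [jop_eq_smul_cayley_conj_iop]
  exact formUnitary_le_formUnitary_smul _ _ (conj_mem_formUnitary cayley_mem_unitary hN)

theorem transferOp_eq_mul (E : ℝ) (V T Tinv : H →L[ℂ] H) :
    transferOp E V T Tinv =
      blockOp 1 ((E : ℂ) • 1 - V) 0 1 * Iop H * blockOp Tinv 0 0 (star T) := by
  rw [Iop, blockOp_mul_blockOp, blockOp_mul_blockOp, transferOp, mul_def, star_eq_adjoint]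
  simp

theorem transferOp_mem_formUnitary (E : ℝ) {V T Tinv : H →L[ℂ] H} (hV : IsSelfAdjoint V)
    (hT : T * Tinv = 1) (hT' : Tinv * T = 1) :
    transferOp E V T Tinv ∈ formUnitary (Iop H) := by
  have hW : IsSelfAdjoint ((E : ℂ) • (1 : H →L[ℂ] H) - V) :=
    (IsSelfAdjoint.smul (Complex.conj_ofReal E) (.one _)).sub hV
  rw [transferOp_eq_mul]
  exact mul_mem (mul_mem (blockOp_shear_mem_formUnitary hW) (mem_formUnitary_self iop_mem_unitary))
    (blockOp_diag_mem_formUnitary ⟨Tinv, T, hT', hT⟩)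

/-- The Cayley conjugate `C M^E C*` of the transfer operator is `J`-unitary and equals the
explicit block operator of equation (8) of the paper. -/
theorem cayley_conj_transferOp (E : ℝ) (V T Tinv : H →L[ℂ] H)
    (hV : IsSelfAdjoint V) (hT : T ∘L Tinv = 1) (hT' : Tinv ∘L T = 1) :
    (IsUnit (Cayley H ∘L transferOp E V T Tinv ∘L adjoint (Cayley H)) ∧
      adjoint (Cayley H ∘L transferOp E V T Tinv ∘L adjoint (Cayley H)) ∘L Jop H ∘L
        (Cayley H ∘L transferOp E V T Tinv ∘L adjoint (Cayley H)) = Jop H) ∧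
    Cayley H ∘L transferOp E V T Tinv ∘L adjoint (Cayley H) =
      blockOp
        ((2 : ℂ)⁻¹ • (((((E : ℂ) • (1 : H →L[ℂ] H)) - V) ∘L Tinv) -
            Complex.I • (adjoint T + Tinv)))
        ((2 : ℂ)⁻¹ • (((((E : ℂ) • (1 : H →L[ℂ] H)) - V) ∘L Tinv) +
            Complex.I • (adjoint T - Tinv)))
        ((2 : ℂ)⁻¹ • (((((E : ℂ) • (1 : H →L[ℂ] H)) - V) ∘L Tinv) -
            Complex.I • (adjoint T - Tinv)))
        ((2 : ℂ)⁻¹ • (((((E : ℂ) • (1 : H →L[ℂ] H)) - V) ∘L Tinv) +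
            Complex.I • (adjoint T + Tinv))) := by
  have hJ := cayley_conj_mem_formUnitary (transferOp_mem_formUnitary E hV hT hT')
  simp only [← mul_def, ← star_eq_adjoint]
  refine ⟨by simpa only [mem_formUnitary_iff, mul_assoc] using hJ, ?_⟩
  rw [← mul_assoc, transferOp, cayley_mul_blockOp_mul_star_cayley, smul_blockOp]
  simp only [star_eq_adjoint, mul_def]
  congr 1 <;> module
end
end

section
/- Let Λ = max{‖V‖, ‖T‖, ‖T⁻¹‖}, and let C₀ = (1/2)[(E−V)T⁻¹ − i(T* − T⁻¹)] and D₀ = (1/2)[(E−V)T⁻¹ + i(T* + T⁻¹)] be the lower-left and lower-right blocks of C M^E C*. Then D₀ is invertible and ‖D₀⁻¹C₀‖² ≤ 1 − 4Λ⁻²(|E| + Λ + 2)⁻². -/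
/-!
Put `S = T⁻¹` and `W = E - V`. The lower-left block `C` and the upper-right block `B` of the
Cayley conjugate each differ from its lower-right block `D` by the sign of one summand:
`D = p + q` and `C = p - q` with `p = (W S + i S) / 2`, `q = (i / 2) T*`, while `D = p + q` and
`B = p - q` with `p = (W S + i T*) / 2`, `q = (i / 2) S`. Polarization then turns the
self-adjointness of `W` and of `S* W S` into `D D* = 1 + C C*` and `D* D = 1 + B* B`. Both are at
least `1`, which gives `D` a right and a left inverse, and
`(D⁻¹ C) (D⁻¹ C)* = 1 - D⁻¹ (D⁻¹)* ≤ 1 - ‖D‖⁻²`.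
-/

open ContinuousLinearMap

noncomputable section

variable {H : Type*} [NormedAddCommGroup H] [InnerProductSpace ℂ H] [CompleteSpace H]

theorem isUnit_of_isUnit_mul_of_isUnit_mul {M : Type*} [Monoid M] {a b c : M}
    (hab : IsUnit (a * b)) (hca : IsUnit (c * a)) : IsUnit a := by
  obtain ⟨r, hr⟩ := hab.exists_right_inv
  obtain ⟨l, hl⟩ := hca.exists_left_inv
  exact isUnit_iff_exists_and_exists.mpr
    ⟨⟨b * r, by rw [← mul_assoc, hr]⟩, ⟨l * c, by rw [mul_assoc, hl]⟩⟩

theorem add_mul_star_add_eq {R : Type*} [NonUnitalNonAssocRing R] [StarRing R] (p q : R) :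
    (p + q) * star (p + q) = (p - q) * star (p - q) + 2 • (p * star q + q * star p) := by
  simp only [star_add, star_sub, add_mul, mul_add, sub_mul, mul_sub]
  abel

section CStarAlgebra

variable {A : Type*} [CStarAlgebra A]

theorem isUnit_one_add_mul_star_self (c : A) : IsUnit (1 + c * star c) := by
  let _ := CStarAlgebra.spectralOrder A
  have := CStarAlgebra.spectralOrderedRing A
  exact CStarAlgebra.isUnit_of_le 1 (le_add_of_nonneg_right (mul_star_self_nonneg c))
    isStrictlyPositive_one

theorem isUnit_of_mul_star_self_eq_of_star_mul_self_eq {b c d : A}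
    (hc : d * star d = 1 + c * star c) (hb : star d * d = 1 + star b * b) : IsUnit d := by
  have h_mul_star : IsUnit (d * star d) := hc ▸ isUnit_one_add_mul_star_self c
  have h_star_mul : IsUnit (star d * d) := by
    simpa only [hb, star_star] using isUnit_one_add_mul_star_self (star b)
  exact isUnit_of_isUnit_mul_of_isUnit_mul h_mul_star h_star_mul

theorem norm_inv_mul_sq_le_one_sub [Nontrivial A] (d : Aˣ) (c : A)
    (h : (d : A) * star (d : A) = 1 + c * star c) :
    ‖↑d⁻¹ * c‖ ^ 2 ≤ 1 - (‖(d : A)‖ ^ 2)⁻¹ := by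
  let _ := CStarAlgebra.spectralOrder A
  have := CStarAlgebra.spectralOrderedRing A
  have hd : 0 < ‖(d : A)‖ ^ 2 := pow_pos d.norm_pos 2
  have hinv : star (d : A) * star (↑d⁻¹ : A) = 1 := by
    rw [← star_mul, d.inv_mul, star_one]
  have one_le_norm_sq : 1 ≤ ‖(d : A)‖ ^ 2 := by
    have hle : (1 : A) ≤ d * star (d : A) :=
      h ▸ le_add_of_nonneg_right (mul_star_self_nonneg c)
    simpa only [CStarRing.norm_one, CStarRing.norm_self_mul_star, ← sq] using
      CStarAlgebra.norm_le_norm_of_nonneg_of_le zero_le_one hle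
  have defect : (↑d⁻¹ * c) * star (↑d⁻¹ * c) = 1 - ↑d⁻¹ * star (↑d⁻¹ : A) := by
    rw [eq_sub_iff_add_eq']
    calc (↑d⁻¹ : A) * star (↑d⁻¹ : A) + ↑d⁻¹ * c * star (↑d⁻¹ * c)
        = ↑d⁻¹ * (1 + c * star c) * star (↑d⁻¹ : A) := by rw [star_mul]; noncomm_ring
      _ = (↑d⁻¹ * d) * (star (d : A) * star (↑d⁻¹ : A)) := by
          rw [← h]; simp only [mul_assoc]
      _ = 1 := by rw [d.inv_mul, hinv, mul_one]
  have one_le : (1 : A) ≤ ‖(d : A)‖ ^ 2 • (↑d⁻¹ * star (↑d⁻¹ : A)) := by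
    have := star_right_conjugate_le_conjugate
      (CStarAlgebra.mul_star_le_algebraMap_norm_sq (a := (d : A))) (↑d⁻¹ : A)
    rwa [← mul_assoc, d.inv_mul, one_mul, hinv, ← Algebra.commutes, mul_assoc,
      ← Algebra.smul_def] at this
  rw [sq, ← CStarRing.norm_self_mul_star,
    CStarAlgebra.norm_le_iff_le_algebraMap _ (sub_nonneg.mpr (inv_le_one_of_one_le₀ one_le_norm_sq))
      (mul_star_self_nonneg _),
    defect, map_sub, map_one, Algebra.algebraMap_eq_smul_one]
  exact sub_le_sub_left ((inv_smul_le_iff_of_pos hd).mpr one_le) 1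

end CStarAlgebra

section Blocks

variable {A : Type*} [Ring A] [StarRing A] [Algebra ℂ A]

/-- The lower-left block of the Cayley conjugate of `[[W T⁻¹, -T*], [T⁻¹, 0]]`; the transfer
operator at energy `E` is the case `W = E - V`. -/
def cayleyBlock₂₁ (W : A) (T : Aˣ) : A :=
  (2 : ℂ)⁻¹ • (W * ↑T⁻¹ - Complex.I • (star (T : A) - ↑T⁻¹))

/-- The upper-right block of the Cayley conjugate of `[[W T⁻¹, -T*], [T⁻¹, 0]]`. -/
def cayleyBlock₁₂ (W : A) (T : Aˣ) : A :=
  (2 : ℂ)⁻¹ • (W * ↑T⁻¹ + Complex.I • (star (T : A) - ↑T⁻¹))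

/-- The lower-right block of the Cayley conjugate of `[[W T⁻¹, -T*], [T⁻¹, 0]]`. -/
def cayleyBlock₂₂ (W : A) (T : Aˣ) : A :=
  (2 : ℂ)⁻¹ • (W * ↑T⁻¹ + Complex.I • (star (T : A) + ↑T⁻¹))

variable [StarModule ℂ A]

theorem add_mul_star_add_eq_one_add {p q K : A} (hK : IsSelfAdjoint K)
    (hpq : p * star q = (4 : ℂ)⁻¹ • (1 + Complex.I • K)) :
    (p + q) * star (p + q) = 1 + (p - q) * star (p - q) := by
  have hqp : q * star p = (4 : ℂ)⁻¹ • (1 - Complex.I • K) := by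
    rw [← star_star q, ← star_mul, hpq, star_smul, star_add, star_smul, star_one, hK.star_eq]
    simp [sub_eq_add_neg]
  rw [add_mul_star_add_eq, hpq, hqp]
  module

variable {W : A}

theorem cayleyBlock₂₂_mul_star_self (hW : IsSelfAdjoint W) (T : Aˣ) :
    cayleyBlock₂₂ W T * star (cayleyBlock₂₂ W T) =
      1 + cayleyBlock₂₁ W T * star (cayleyBlock₂₁ W T) := by
  set p : A := (2 : ℂ)⁻¹ • (W * ↑T⁻¹ + Complex.I • (↑T⁻¹ : A)) with hp
  set q : A := (2⁻¹ * Complex.I) • star (T : A) with hq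
  have hD : cayleyBlock₂₂ W T = p + q := by rw [cayleyBlock₂₂, hp, hq]; module
  have hC : cayleyBlock₂₁ W T = p - q := by rw [cayleyBlock₂₁, hp, hq]; module
  have hpq : p * star q = (4 : ℂ)⁻¹ • (1 + Complex.I • (-W)) := by
    have hq' : star q = (-(2⁻¹ * Complex.I)) • (T : A) := by simp [hq, star_smul]
    have hpT : (W * ↑T⁻¹ + Complex.I • (↑T⁻¹ : A)) * T = W + Complex.I • 1 := by
      rw [add_mul, smul_mul_assoc, T.inv_mul_cancel_right, T.inv_mul]
    rw [hp, hq', smul_mul_smul_comm, hpT]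
    match_scalars
    · ring
    · linear_combination (-4⁻¹ : ℂ) * Complex.I_mul_I
  rw [hD, hC, add_mul_star_add_eq_one_add hW.neg hpq]

theorem star_cayleyBlock₂₂_mul_self (hW : IsSelfAdjoint W) (T : Aˣ) :
    star (cayleyBlock₂₂ W T) * cayleyBlock₂₂ W T =
      1 + star (cayleyBlock₁₂ W T) * cayleyBlock₁₂ W T := by
  set p : A := (2 : ℂ)⁻¹ • (W * ↑T⁻¹ + Complex.I • star (T : A)) with hp
  set q : A := (2⁻¹ * Complex.I) • (↑T⁻¹ : A) with hq
  have hD : cayleyBlock₂₂ W T = p + q := by rw [cayleyBlock₂₂, hp, hq]; module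
  have hB : cayleyBlock₁₂ W T = p - q := by rw [cayleyBlock₁₂, hp, hq]; module
  have hpq : star p * star (star q) =
      (4 : ℂ)⁻¹ • (1 + Complex.I • (star (↑T⁻¹ : A) * W * ↑T⁻¹)) := by
    have hp' : star p = (2 : ℂ)⁻¹ • (star (↑T⁻¹ : A) * W - Complex.I • (T : A)) := by
      simp [hp, star_smul, hW.star_eq, sub_eq_add_neg]
    have hpS : (star (↑T⁻¹ : A) * W - Complex.I • (T : A)) * ↑T⁻¹ =
        star (↑T⁻¹ : A) * W * ↑T⁻¹ - Complex.I • 1 := by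
      rw [sub_mul, smul_mul_assoc, T.mul_inv]
    rw [star_star, hp', hq, smul_mul_smul_comm, hpS]
    match_scalars
    · ring
    · linear_combination (-4⁻¹ : ℂ) * Complex.I_mul_I
  simpa only [hD, hB, star_add, star_sub, star_star] using
    add_mul_star_add_eq_one_add (hW.conjugate' (↑T⁻¹ : A)) hpq

end Blocks

theorem norm_cayleyBlock₂₂_le {A : Type*} [NormedRing A] [StarRing A] [NormedStarGroup A]
    [NormedAlgebra ℂ A] (W : A) (T : Aˣ) :
    ‖cayleyBlock₂₂ W T‖ ≤ (‖W‖ * ‖(↑T⁻¹ : A)‖ + (‖(T : A)‖ + ‖(↑T⁻¹ : A)‖)) / 2 := by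
  rw [cayleyBlock₂₂, norm_smul, norm_inv, Complex.norm_ofNat, inv_mul_eq_div]
  gcongr
  calc ‖W * ↑T⁻¹ + Complex.I • (star (T : A) + ↑T⁻¹)‖
      ≤ ‖W * ↑T⁻¹‖ + ‖Complex.I • (star (T : A) + ↑T⁻¹)‖ := norm_add_le _ _
    _ ≤ ‖W‖ * ‖(↑T⁻¹ : A)‖ + (‖(T : A)‖ + ‖(↑T⁻¹ : A)‖) := by
        rw [norm_smul, Complex.norm_I, one_mul]
        gcongr
        · exact norm_mul_le _ _
        · exact (norm_add_le _ _).trans_eq (by rw [norm_star])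

section TransferOperator

variable {A : Type*} [CStarAlgebra A]

theorem norm_ofReal_smul_one_sub_le [Nontrivial A] (E : ℝ) (V : A) :
    ‖(E : ℂ) • (1 : A) - V‖ ≤ |E| + ‖V‖ := by
  refine (norm_sub_le _ _).trans_eq ?_
  rw [norm_smul, CStarRing.norm_one, mul_one, Complex.norm_real, Real.norm_eq_abs]

theorem norm_cayleyBlock₂₂_ofReal_smul_one_sub_le [Nontrivial A] (E : ℝ) {V : A} {T : Aˣ} {L : ℝ}
    (hV : ‖V‖ ≤ L) (hT : ‖(T : A)‖ ≤ L) (hTinv : ‖(↑T⁻¹ : A)‖ ≤ L) :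
    ‖cayleyBlock₂₂ ((E : ℂ) • 1 - V) T‖ ≤ L * (|E| + L + 2) / 2 := by
  have hL : 0 ≤ L := (norm_nonneg V).trans hV
  have hW : ‖(E : ℂ) • (1 : A) - V‖ ≤ |E| + L :=
    (norm_ofReal_smul_one_sub_le E V).trans (by gcongr)
  calc ‖cayleyBlock₂₂ ((E : ℂ) • 1 - V) T‖
      ≤ (‖(E : ℂ) • (1 : A) - V‖ * ‖(↑T⁻¹ : A)‖ + (‖(T : A)‖ + ‖(↑T⁻¹ : A)‖)) / 2 :=
        norm_cayleyBlock₂₂_le _ T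
    _ ≤ ((|E| + L) * L + (L + L)) / 2 := by gcongr
    _ = L * (|E| + L + 2) / 2 := by ring

theorem cayley_conj_transferOp_block_bound_general (E : ℝ) {V : A} (hV : IsSelfAdjoint V)
    (T : Aˣ) :
    ∃ D : Aˣ, (D : A) = cayleyBlock₂₂ ((E : ℂ) • 1 - V) T ∧
      ‖↑D⁻¹ * cayleyBlock₂₁ ((E : ℂ) • 1 - V) T‖ ^ 2 ≤
        1 - 4 * ((max (max ‖V‖ ‖(T : A)‖) ‖(↑T⁻¹ : A)‖) ^ 2)⁻¹ *
          ((|E| + max (max ‖V‖ ‖(T : A)‖) ‖(↑T⁻¹ : A)‖ + 2) ^ 2)⁻¹ := by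
  have hW : IsSelfAdjoint ((E : ℂ) • 1 - V) :=
    (IsSelfAdjoint.smul (Complex.conj_ofReal E) (.one A)).sub hV
  set W : A := (E : ℂ) • 1 - V
  set L : ℝ := max (max ‖V‖ ‖(T : A)‖) ‖(↑T⁻¹ : A)‖ with hL
  have hDC := cayleyBlock₂₂_mul_star_self hW T
  obtain ⟨D, hD⟩ := isUnit_of_mul_star_self_eq_of_star_mul_self_eq hDC
    (star_cayleyBlock₂₂_mul_self hW T)
  refine ⟨D, hD, ?_⟩
  rcases subsingleton_or_nontrivial A with _ | _
  · simp [hL, norm_of_subsingleton]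
  rw [← hD] at hDC
  have hDL : ‖(D : A)‖ ≤ L * (|E| + L + 2) / 2 :=
    hD ▸ norm_cayleyBlock₂₂_ofReal_smul_one_sub_le E
      ((le_max_left _ _).trans (le_max_left _ _)) ((le_max_right _ _).trans (le_max_left _ _))
      (le_max_right _ _)
  calc ‖↑D⁻¹ * cayleyBlock₂₁ W T‖ ^ 2
      ≤ 1 - (‖(D : A)‖ ^ 2)⁻¹ := norm_inv_mul_sq_le_one_sub D _ hDC
    _ ≤ 1 - ((L * (|E| + L + 2) / 2) ^ 2)⁻¹ := by
        have := D.norm_pos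
        gcongr
    _ = 1 - 4 * (L ^ 2)⁻¹ * ((|E| + L + 2) ^ 2)⁻¹ := by
        rw [div_pow, mul_pow, inv_div, div_eq_mul_inv, mul_inv]
        ring

end TransferOperator

/-- Let `Λ = max{‖V‖, ‖T‖, ‖T⁻¹‖}`, and let `C₀ = (1/2)[(E−V)T⁻¹ − i(T* − T⁻¹)]` and
`D₀ = (1/2)[(E−V)T⁻¹ + i(T* + T⁻¹)]` be the lower-left and lower-right blocks of the
Cayley conjugate `C M^E C*` of the transfer operator.  Then `D₀` is invertible and
`‖D₀⁻¹C₀‖² ≤ 1 − 4Λ⁻²(|E| + Λ + 2)⁻²`. -/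
theorem cayley_conj_transferOp_block_bound (E : ℝ) (V T Tinv : H →L[ℂ] H)
    (hV : IsSelfAdjoint V) (hT : T ∘L Tinv = 1) (hT' : Tinv ∘L T = 1) :
    ∃ Dinv : H →L[ℂ] H,
      ((2 : ℂ)⁻¹ • (((((E : ℂ) • (1 : H →L[ℂ] H)) - V) ∘L Tinv) +
          Complex.I • (adjoint T + Tinv))) ∘L Dinv = 1 ∧
      Dinv ∘L ((2 : ℂ)⁻¹ • (((((E : ℂ) • (1 : H →L[ℂ] H)) - V) ∘L Tinv) +
          Complex.I • (adjoint T + Tinv))) = 1 ∧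
      ‖Dinv ∘L ((2 : ℂ)⁻¹ • (((((E : ℂ) • (1 : H →L[ℂ] H)) - V) ∘L Tinv) -
          Complex.I • (adjoint T - Tinv)))‖ ^ 2 ≤
        1 - 4 * ((max (max ‖V‖ ‖T‖) ‖Tinv‖) ^ 2)⁻¹ *
          ((|E| + max (max ‖V‖ ‖T‖) ‖Tinv‖ + 2) ^ 2)⁻¹ := by
  obtain ⟨D, hD, hbound⟩ :=
    cayley_conj_transferOp_block_bound_general E hV ⟨T, Tinv, hT, hT'⟩
  exact ⟨↑D⁻¹, D.mul_inv_eq_one.mpr hD.symm, D.inv_mul_eq_one.mpr hD, hbound⟩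
end
end

section
/- If N = [[A,B],[C,D]] is a J-unitary operator on K and U is a unitary operator on H, then CU + D is invertible and the Möbius transform (AU + B)(CU + D)⁻¹ is a unitary operator on H. -/
open ContinuousLinearMap

noncomputable section

variable {H : Type*} [NormedAddCommGroup H] [InnerProductSpace ℂ H] [CompleteSpace H]

/-!
`N = [[A, B], [C, D]]` sends the isotropic columns `(U, 1)` and `(U, -1)` to isotropic columns
`(P, Q)` and `(P', Q')`, where `P = AU + B` and `Q = CU + D`. Isotropy reads `P⋆P = Q⋆Q`, so that
`P Q⁻¹` is unitary as soon as `P` and `Q` are both invertible. The dual identity `N J N⋆ = J` says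
that `P P'⋆` and `-Q Q'⋆` have real part `1`, so `P` and `Q` have right inverses. They are also left
regular: by isotropy they have the same right annihilator, which the cross relation
`P'⋆P - Q'⋆Q = 2` forces to vanish.
-/

theorem mul_mul_eq_of_mul_mul_eq_of_isUnit {M : Type*} [Monoid M] {j m n : M} (hj : j * j = 1)
    (hn : IsUnit n) (h : m * j * n = j) : n * j * m = j := by
  obtain ⟨u, rfl⟩ := hn
  have hm : m = j * ↑u⁻¹ * j := by
    rw [← u.eq_mul_inv_iff_mul_eq.2 h, mul_assoc, hj, mul_one]
  calc ↑u * j * m = u * (j * j) * ↑u⁻¹ * j := by simp only [hm, mul_assoc]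
    _ = j := by rw [hj, mul_one, Units.mul_inv, one_mul]

theorem star_fin_two {α : Type*} [Star α] (a b c d : α) :
    star !![a, b; c, d] = !![star a, star c; star b, star d] := by
  ext i j
  fin_cases i <;> fin_cases j <;> rfl

section IsotropicFrame

variable {R : Type*} [Ring R]

variable (R) in
/-- The signature `J = diag(1, -1)`, the matrix form of the fundamental symmetry `Jop`. -/
def signatureMatrix : Matrix (Fin 2) (Fin 2) R :=
  !![1, 0; 0, -1]

/-- The matrix with columns `(U, 1)` and `(U, -1)`. For unitary `U` both columns are isotropic for
the signature `J`, and their `J`-pairing is `2`. -/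
def isotropicFrame (U : R) : Matrix (Fin 2) (Fin 2) R :=
  !![U, U; 1, -1]

theorem signatureMatrix_mul_self : signatureMatrix R * signatureMatrix R = 1 := by
  simp [signatureMatrix, Matrix.one_fin_two]

theorem mul_isotropicFrame (A B C D U : R) :
    !![A, B; C, D] * isotropicFrame U = !![A * U + B, A * U - B; C * U + D, C * U - D] := by
  simp [isotropicFrame, sub_eq_add_neg]

variable [StarRing R] {U : R}

theorem star_isotropicFrame_mul_signatureMatrix_mul (hU : star U * U = 1) :
    star (isotropicFrame U) * signatureMatrix R * isotropicFrame U = !![0, 2; 2, 0] := by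
  simp [isotropicFrame, signatureMatrix, star_fin_two, hU, one_add_one_eq_two]

theorem isotropicFrame_mul_swap_mul_star (hU : U * star U = 1) :
    isotropicFrame U * !![0, 1; 1, 0] * star (isotropicFrame U) = 2 • signatureMatrix R := by
  simp [isotropicFrame, signatureMatrix, star_fin_two, hU, one_add_one_eq_two, ← neg_add]

variable {N : Matrix (Fin 2) (Fin 2) R}

theorem star_mul_isotropicFrame_mul_signatureMatrix_mul
    (hN : star N * signatureMatrix R * N = signatureMatrix R) (hU : star U * U = 1) :
    star (N * isotropicFrame U) * signatureMatrix R * (N * isotropicFrame U) = !![0, 2; 2, 0] :=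
  calc star (N * isotropicFrame U) * signatureMatrix R * (N * isotropicFrame U)
      = star (isotropicFrame U) * (star N * signatureMatrix R * N) * isotropicFrame U := by
        simp only [star_mul, mul_assoc]
    _ = !![0, 2; 2, 0] := by rw [hN, star_isotropicFrame_mul_signatureMatrix_mul hU]

theorem mul_isotropicFrame_mul_swap_mul_star
    (hN : N * signatureMatrix R * star N = signatureMatrix R) (hU : U * star U = 1) :
    N * isotropicFrame U * !![0, 1; 1, 0] * star (N * isotropicFrame U) =
      2 • signatureMatrix R :=
  calc N * isotropicFrame U * !![0, 1; 1, 0] * star (N * isotropicFrame U)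
      = N * (isotropicFrame U * !![0, 1; 1, 0] * star (isotropicFrame U)) * star N := by
        simp only [star_mul, mul_assoc]
    _ = 2 • signatureMatrix R := by
      rw [isotropicFrame_mul_swap_mul_star hU, mul_smul_comm, smul_mul_assoc, hN]

end IsotropicFrame

section CStarAlgebra

theorem mul_eq_zero_of_star_mul_self_eq {E : Type*} [NonUnitalNormedRing E] [StarRing E]
    [CStarRing E] {x y z : E} (h : star x * x = star y * y) (hx : x * z = 0) : y * z = 0 := by
  rw [← CStarRing.star_mul_self_eq_zero_iff, star_mul, mul_assoc, ← mul_assoc (star y), ← h,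
    mul_assoc, hx, mul_zero, mul_zero]

variable {𝒜 : Type*} [CStarAlgebra 𝒜]

theorem isUnit_of_add_star_eq_two {z : 𝒜} (h : z + star z = 2) : IsUnit z := by
  -- `z - 1` is skew-adjoint, so its spectrum is purely imaginary and does not contain `-1`.
  have hself : IsSelfAdjoint (Complex.I • (z - 1)) := by
    have hskew : star (z - 1) = -(z - 1) := by
      rw [star_sub, star_one, eq_sub_of_add_eq' h, ← one_add_one_eq_two]
      abel
    rw [isSelfAdjoint_iff, star_smul, hskew]
    simp only [RCLike.star_def, Complex.conj_I, smul_neg, neg_smul, neg_neg]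
  have hspec : -Complex.I ∉ spectrum ℂ (Complex.I • (z - 1)) := fun hmem ↦ by
    simpa using hself.im_eq_zero_of_mem_spectrum hmem
  have hz : algebraMap ℂ 𝒜 (-Complex.I) - Complex.I • (z - 1) =
      Units.mk0 (-Complex.I) (neg_ne_zero.2 Complex.I_ne_zero) • z := by
    rw [Algebra.algebraMap_eq_smul_one, Units.smul_mk0]
    module
  rwa [spectrum.notMem_iff, hz, isUnit_smul_iff] at hspec

theorem isUnit_of_star_mul_self_eq {x x' y y' : 𝒜} (hxy : star x * x = star y * y)
    (hrow : x * star x' + x' * star x = 2) (hcross : star x' * x + star y' * y = 2) :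
    IsUnit x := by
  obtain ⟨w, hw⟩ : ∃ w, x * star x' * w = 1 :=
    (isUnit_of_add_star_eq_two (by simpa using hrow)).exists_right_inv
  have hreg : IsLeftRegular x := isLeftRegular_iff_right_eq_zero_of_mul.2 fun v hv ↦ by
    have htwo : (2 : ℂ) • v = 0 :=
      calc (2 : ℂ) • v = (star x' * x + star y' * y) * v := by rw [hcross, two_mul, two_smul]
        _ = star x' * (x * v) + star y' * (y * v) := by simp only [add_mul, mul_assoc]
        _ = 0 := by rw [hv, mul_eq_zero_of_star_mul_self_eq hxy hv]; simp
    exact (smul_eq_zero_iff_right two_ne_zero).1 htwo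
  rw [mul_assoc] at hw
  exact ⟨⟨x, star x' * w, hw, hreg (by simp [← mul_assoc, hw])⟩, rfl⟩

theorem star_mul_self_eq_and_isUnit_of_isotropic_columns {p p' q q' : 𝒜}
    (hcol : star !![p, p'; q, q'] * signatureMatrix 𝒜 * !![p, p'; q, q'] = !![0, 2; 2, 0])
    (hrow : !![p, p'; q, q'] * !![0, 1; 1, 0] * star !![p, p'; q, q'] = 2 • signatureMatrix 𝒜) :
    star p * p = star q * q ∧ IsUnit p ∧ IsUnit q := by
  rw [star_fin_two] at hcol hrow
  have hpq : star p * p = star q * q := sub_eq_zero.1 <| by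
    simpa [signatureMatrix, sub_eq_add_neg] using congr_fun₂ hcol 0 0
  have hcross : star p' * p - star q' * q = 2 := by
    simpa [signatureMatrix, sub_eq_add_neg] using congr_fun₂ hcol 1 0
  have hp : p * star p' + p' * star p = 2 := by
    simpa [signatureMatrix, add_comm] using congr_fun₂ hrow 0 0
  have hq : q * star q' + q' * star q = -2 := by
    simpa [signatureMatrix, add_comm] using congr_fun₂ hrow 1 1
  refine ⟨hpq, isUnit_of_star_mul_self_eq (y' := -q') hpq hp ?_,
    isUnit_of_star_mul_self_eq (x' := -q') (y' := p') hpq.symm ?_ ?_⟩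
  · simpa [sub_eq_add_neg] using hcross
  · simp [← neg_eq_iff_eq_neg.2 hq, add_comm]
  · simpa [sub_eq_neg_add] using hcross

theorem moebius_of_J_unitary_general {A B C D U : 𝒜} (hN : IsUnit !![A, B; C, D])
    (hNJ : star !![A, B; C, D] * signatureMatrix 𝒜 * !![A, B; C, D] = signatureMatrix 𝒜)
    (hU : U ∈ unitary 𝒜) :
    ∃ W : 𝒜, (C * U + D) * W = 1 ∧ W * (C * U + D) = 1 ∧ (A * U + B) * W ∈ unitary 𝒜 := by
  have hNJ' := mul_mul_eq_of_mul_mul_eq_of_isUnit signatureMatrix_mul_self hN hNJ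
  obtain ⟨hPQ, ⟨P, hP⟩, ⟨Q, hQ⟩⟩ :
      star (A * U + B) * (A * U + B) = star (C * U + D) * (C * U + D) ∧
        IsUnit (A * U + B) ∧ IsUnit (C * U + D) := by
    apply star_mul_self_eq_and_isUnit_of_isotropic_columns (p' := A * U - B) (q' := C * U - D)
    all_goals rw [← mul_isotropicFrame]
    · exact star_mul_isotropicFrame_mul_signatureMatrix_mul hNJ (Unitary.star_mul_self_of_mem hU)
    · exact mul_isotropicFrame_mul_swap_mul_star hNJ' (Unitary.mul_star_self_of_mem hU)
  rw [← hP, ← hQ] at hPQ ⊢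
  exact ⟨↑Q⁻¹, Q.mul_inv, Q.inv_mul, (P.mul_inv_mem_unitary Q).2 (Units.ext hPQ)⟩

end CStarAlgebra

section BlockOp

theorem blockOp_apply_s7 {E : Type*} [NormedAddCommGroup E] [InnerProductSpace ℂ E]
    (A B C D : E →L[ℂ] E) (v : Kspace E) :
    blockOp A B C D v = WithLp.toLp 2 (A v.fst + B v.snd, C v.fst + D v.snd) := rfl

variable (H) in
/-- The identification of `2 × 2` matrices of operators on `H` with operators on `K = H ⊕ H`, which
turns `J`-unitarity of `blockOp A B C D` into a statement about the matrix `[[A, B], [C, D]]`. -/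
def blockOpEquiv : Matrix (Fin 2) (Fin 2) (H →L[ℂ] H) ≃⋆+* (Kspace H →L[ℂ] Kspace H) where
  toFun N := blockOp (N 0 0) (N 0 1) (N 1 0) (N 1 1)
  invFun T :=
    let toK := (WithLp.prodContinuousLinearEquiv 2 ℂ H H).symm.toContinuousLinearMap
    !![WithLp.fstL 2 ℂ H H ∘L T ∘L toK ∘L inl ℂ H H, WithLp.fstL 2 ℂ H H ∘L T ∘L toK ∘L inr ℂ H H;
      WithLp.sndL 2 ℂ H H ∘L T ∘L toK ∘L inl ℂ H H, WithLp.sndL 2 ℂ H H ∘L T ∘L toK ∘L inr ℂ H H]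
  left_inv N := by
    ext i j x
    fin_cases i <;> fin_cases j <;> simp [blockOp_apply_s7]
  right_inv T := by
    ext v
    have hv : v = WithLp.toLp 2 (v.fst, 0) + WithLp.toLp 2 (0, v.snd) := by
      simp only [← WithLp.toLp_add, Prod.mk_add_mk, add_zero, zero_add]
      rfl
    conv_rhs => rw [hv, map_add]
    rfl
  map_add' M N := by
    ext v
    simp [blockOp_apply_s7, add_add_add_comm, ← WithLp.toLp_add]
  map_mul' M N := by
    ext v
    simp [blockOp_apply_s7, Matrix.mul_apply, add_add_add_comm]
  map_star' N := by
    refine (eq_adjoint_iff _ _).2 fun v w ↦ ?_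
    simp only [Matrix.star_apply, star_eq_adjoint, blockOp_apply_s7, WithLp.prod_inner_apply,
      WithLp.ofLp_fst, WithLp.ofLp_snd, inner_add_left, inner_add_right, adjoint_inner_left]
    abel

end BlockOp

/-- If `N = [[A,B],[C,D]]` is `J`-unitary and `U` is unitary on `H`, then `CU + D` is
invertible and the Möbius transform `(AU + B)(CU + D)⁻¹` is unitary. -/
theorem moebius_of_J_unitary (A B C D U : H →L[ℂ] H)
    (hNinv : IsUnit (blockOp A B C D))
    (hNJ : adjoint (blockOp A B C D) ∘L Jop H ∘L blockOp A B C D = Jop H)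
    (hU : U ∈ unitary (H →L[ℂ] H)) :
    ∃ W : H →L[ℂ] H, (C ∘L U + D) ∘L W = 1 ∧ W ∘L (C ∘L U + D) = 1 ∧
      (A ∘L U + B) ∘L W ∈ unitary (H →L[ℂ] H) := by
  exact moebius_of_J_unitary_general ((isUnit_map_iff (blockOpEquiv H) !![A, B; C, D]).1 hNinv)
    (EquivLike.injective (blockOpEquiv H) (by rw [map_mul, map_mul, map_star]; exact hNJ)) hU
end
end
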